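/- Let f satisfy the regularity and decay assumption, let F be its Radon transform and α(χ,u) := PV ∫_ℝ ∂_u F(χ,u')/(u'−u) du'. Then there exist constants r, R, C, c > 0 such that for every unit vector χ ∈ S² and every k ∈ ℝ³ with 0 < |k| ≤ r: there is exactly one u₀⁺ = u₀⁺(k,χ) ≥ R with α(χ, u₀⁺) = |k|², there is exactly one u₀⁻ = u₀⁻(k,χ) ≤ −R with α(χ, u₀⁻) = |k|², and they satisfy c/|k| ≤ |u₀^±(k,χ)| ≤ C/|k|. -/

import Mathlib

/-!
Write `F` for the Radon transform in a fixed direction `χ` and `H h (u) = PV ∫ h(s)/(s-u) ds`, so that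
`α = H F'`. Symmetrising about `u` gives the absolutely convergent form
`H h (u) = ∫ (h(u+t) - h(u-t)) / (2t) dt` (`Good.pvReal_eq`), from which one reads off

* a uniform bound `|H h| ≤ 3πA` when `|h|, |h'| ≤ A/(1+s²)` (`Good.Hil_bound`),
* the derivative rule `(H h)' = H h'` (`Good.Hil_deriv`), by dominated convergence,
* the identity `H(s·h)(u) = u·H h(u) + ∫ h` (`Good.Hil_mul`).

Iterating the last identity with the moments `∫F' = 0`, `∫sF' = -1`, `∫F'' = ∫sF'' = 0`,
`∫s²F'' = 2` (integration by parts from `∫F = 1`) yields `u²α(u) = 1 + O(1/|u|)` and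
`u³α'(u) = -2 + O(1/|u|)` (`expansion`). Hence for `|u| ≥ R` the function `α` is strictly monotone on
each half-line and lies between `1/(2u²)` and `3/(2u²)`; the intermediate value theorem gives the two
unique roots and their size (`roots`).

The constants are uniform in `χ` because the bounds
`|∂_u^m F(χ,u)| ≤ C₀ (∫_{ℝ²} e^{-|y|/2} dy) e^{-|u|/2}` are (`radonD_bound`), all planes `χ^⊥` being
isometric to `ℝ²`. The normalisation `∫F = 1` is Fubini for `ℝ³ = ℝχ ⊕ χ^⊥` (`integral_Radon`).
-/


open MeasureTheory Filter RealInnerProductSpace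

noncomputable section

local notation "E3" => EuclideanSpace ℝ (Fin 3)

/-- The Radon transform `F(χ,u) = ∫_{χ^⊥} f(uχ + w) dw` of `f : ℝ³ → ℝ`, the integral being
taken over the orthogonal complement of `χ` with respect to its canonical (Lebesgue)
measure. -/
def Radon (f : EuclideanSpace ℝ (Fin 3) → ℝ) (χ : E3) (u : ℝ) : ℝ :=
  ∫ w : ((ℝ ∙ χ)ᗮ : Submodule ℝ (EuclideanSpace ℝ (Fin 3))), f (u • χ + (w : E3))

/-- The principal value `PV ∫ g(u')/(u'−u) du' = lim_{δ→0⁺} ∫_{|u'−u|≥δ} g(u')/(u'−u) du'`. -/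
def pvReal (g : ℝ → ℝ) (u : ℝ) : ℝ :=
  limUnder (nhdsWithin (0 : ℝ) (Set.Ioi 0)) fun δ =>
    ∫ u' in {u' : ℝ | δ ≤ |u' - u|}, g u' / (u' - u)

/-- `α(χ,u) = PV ∫ ∂_u F(χ,u')/(u'−u) du'`, where `F` is the Radon transform of `f`. -/
def alphaFun (f : EuclideanSpace ℝ (Fin 3) → ℝ) (χ : E3) (u : ℝ) : ℝ :=
  pvReal (fun s => deriv (Radon f χ) s) u

/-! ### The Hilbert transform on functions with integrable decay -/

/-- `h` is differentiable with derivative `h'`, and both are bounded by `A / (1 + s²)`. -/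
structure Good (A : ℝ) (h h' : ℝ → ℝ) : Prop where
  deriv : ∀ s, HasDerivAt h (h' s) s
  bd : ∀ s, |h s| ≤ A * (1 + s ^ 2)⁻¹
  bd' : ∀ s, |h' s| ≤ A * (1 + s ^ 2)⁻¹

/-- The symmetrised kernel `(h(u+t) - h(u-t)) / (2t)`, whose singularity at `t = 0` is removable. -/
def hker (h : ℝ → ℝ) (u t : ℝ) : ℝ := (h (u + t) - h (u - t)) / (2 * t)

/-- The (unnormalised) Hilbert transform `PV ∫ h(s) / (s - u) ds`, written as an absolutely
convergent integral of the symmetrised kernel. -/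
def Hil (h : ℝ → ℝ) (u : ℝ) : ℝ := ∫ t, hker h u t

namespace Good

variable {A : ℝ} {h h' : ℝ → ℝ}

lemma nonneg (H : Good A h h') : 0 ≤ A := by
  have := (abs_nonneg _).trans (H.bd 0)
  simpa using this

lemma continuous (H : Good A h h') : Continuous h :=
  continuous_iff_continuousAt.2 fun s => (H.deriv s).continuousAt

lemma integrable (H : Good A h h') : Integrable h :=
  (integrable_inv_one_add_sq.const_mul A).mono' H.continuous.aestronglyMeasurable
    (Eventually.of_forall H.bd)

lemma lip (H : Good A h h') (x y : ℝ) : |h y - h x| ≤ A * |y - x| := by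
  refine Convex.norm_image_sub_le_of_norm_hasDerivWithin_le (s := Set.univ) (f' := h')
    (fun s _ => (H.deriv s).hasDerivWithinAt) (fun s _ => ?_) convex_univ trivial trivial
  refine (H.bd' s).trans (mul_le_of_le_one_right H.nonneg ?_)
  exact inv_le_one_of_one_le₀ (by nlinarith [sq_nonneg s])

lemma hker_bound (H : Good A h h') (u t : ℝ) :
    |hker h u t| ≤ A * (2 * (1 + t ^ 2)⁻¹ + ((1 + (u + t) ^ 2)⁻¹ + (1 + (u - t) ^ 2)⁻¹) / 2) := by
  have hA := H.nonneg
  have p1 : 0 ≤ (1 + (u + t) ^ 2)⁻¹ := by positivity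
  have p2 : 0 ≤ (1 + (u - t) ^ 2)⁻¹ := by positivity
  have p3 : 0 ≤ (1 + t ^ 2)⁻¹ := by positivity
  unfold hker
  rcases eq_or_ne t 0 with rfl | ht
  · simp only [mul_zero, div_zero, abs_zero]; positivity
  have ht' : 0 < |t| := abs_pos.2 ht
  rw [abs_div, abs_mul, abs_two, div_le_iff₀ (by positivity)]
  rcases le_total |t| 1 with h1 | h1
  · have e : u + t - (u - t) = 2 * t := by ring
    have := H.lip (u - t) (u + t)
    rw [e, abs_mul, abs_two] at this
    refine this.trans (mul_le_mul_of_nonneg_right ?_ (by positivity))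
    refine le_mul_of_one_le_right hA ?_
    have : t ^ 2 ≤ 1 := by rw [← sq_abs]; nlinarith
    have : (2 : ℝ)⁻¹ ≤ (1 + t ^ 2)⁻¹ := by
      apply inv_anti₀ <;> nlinarith [sq_nonneg t]
    linarith
  · have b1 := H.bd (u + t)
    have b2 := H.bd (u - t)
    have b3 := abs_sub (h (u + t)) (h (u - t))
    have : 0 ≤ A * (1 + t ^ 2)⁻¹ := by positivity
    have q1 : 0 ≤ A * (1 + (u + t) ^ 2)⁻¹ := by positivity
    have q2 : 0 ≤ A * (1 + (u - t) ^ 2)⁻¹ := by positivity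
    nlinarith

lemma integrable_bound (A u : ℝ) : Integrable fun t : ℝ =>
    A * (2 * (1 + t ^ 2)⁻¹ + ((1 + (u + t) ^ 2)⁻¹ + (1 + (u - t) ^ 2)⁻¹) / 2) := by
  have i := integrable_inv_one_add_sq
  exact ((i.const_mul 2).add (((i.comp_add_left u).add (i.comp_sub_left u)).div_const 2)).const_mul A

lemma integral_bound (A u : ℝ) : ∫ t : ℝ,
    A * (2 * (1 + t ^ 2)⁻¹ + ((1 + (u + t) ^ 2)⁻¹ + (1 + (u - t) ^ 2)⁻¹) / 2)
      = 3 * Real.pi * A := by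
  have i := integrable_inv_one_add_sq
  have i1 := i.comp_add_left u
  have i2 := i.comp_sub_left u
  have i3 : Integrable fun t : ℝ => ((1 + (u + t) ^ 2)⁻¹ + (1 + (u - t) ^ 2)⁻¹) / 2 :=
    (i1.add i2).div_const 2
  have e1 := integral_add_left_eq_self (μ := volume) (fun t : ℝ => (1 + t ^ 2)⁻¹) u
  have e2 := integral_sub_left_eq_self (fun t : ℝ => (1 + t ^ 2)⁻¹) volume u
  rw [integral_const_mul, integral_add (i.const_mul 2) i3,
    integral_const_mul, integral_div, integral_add i1 i2, e1, e2, integral_univ_inv_one_add_sq]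
  ring

lemma hker_meas (H : Good A h h') (u : ℝ) : AEStronglyMeasurable (hker h u) := by
  have := H.continuous.measurable
  unfold hker
  exact Measurable.aestronglyMeasurable (by fun_prop)

lemma hker_integrable (H : Good A h h') (u : ℝ) : Integrable (hker h u) :=
  (integrable_bound A u).mono' (H.hker_meas u) (Eventually.of_forall (H.hker_bound u))

lemma Hil_bound (H : Good A h h') (u : ℝ) : |Hil h u| ≤ 3 * Real.pi * A := by
  rw [← integral_bound A u]
  exact norm_integral_le_of_norm_le (f := hker h u) (integrable_bound A u)
    (Eventually.of_forall (H.hker_bound u))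

/-- Multiplication by the variable turns the Hilbert transform into itself times `u`, up to the
mean; this is the source of the expansion at infinity. -/
lemma Hil_mul (H : Good A h h') (u : ℝ) :
    Hil (fun s => s * h s) u = u * Hil h u + ∫ s, h s := by
  have e1 := integral_add_left_eq_self (μ := volume) h u
  have e2 := integral_sub_left_eq_self h volume u
  have i1 := H.integrable.comp_add_left u
  have i2 := H.integrable.comp_sub_left u
  have i3 : Integrable fun t : ℝ => (h (u + t) + h (u - t)) / 2 := (i1.add i2).div_const 2
  have : u * Hil h u + ∫ s, h s = ∫ t, (u * hker h u t + (h (u + t) + h (u - t)) / 2) := by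
    rw [integral_add ((H.hker_integrable u).const_mul u) i3,
      integral_const_mul, integral_div, integral_add i1 i2, e1, e2]
    unfold Hil; ring
  rw [this]
  refine integral_congr_ae ?_
  filter_upwards [compl_mem_ae_iff.2 (measure_singleton (0 : ℝ))] with t ht
  have ht : t ≠ 0 := ht
  simp only [hker]
  field_simp
  ring

lemma Hil_deriv {h'' : ℝ → ℝ} {B : ℝ} (H : Good A h h') (H' : Good B h' h'') (u : ℝ) :
    HasDerivAt (Hil h) (Hil h' u) u := by
  have hB := H'.nonneg
  refine (hasDerivAt_integral_of_dominated_loc_of_deriv_le (μ := volume) (F := hker h)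
    (F' := hker h') (s := Metric.ball u 1)
    (bound := fun t => B * (2 + 2 * (1 + (|u| + 1) ^ 2)) * (1 + t ^ 2)⁻¹)
    (Metric.ball_mem_nhds u one_pos) (Eventually.of_forall H.hker_meas)
    (H.hker_integrable u) (H'.hker_meas u) ?_ (integrable_inv_one_add_sq.const_mul _) ?_).2
  · refine Eventually.of_forall fun t x hx => (H'.hker_bound x t).trans ?_
    have hx : |x| ≤ |u| + 1 := by
      have : |x - u| < 1 := by simpa [Real.dist_eq] using hx
      have := abs_sub_abs_le_abs_sub x u
      linarith
    have hx2 : x ^ 2 ≤ (|u| + 1) ^ 2 := by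
      rw [← sq_abs x]; gcongr
    -- Peetre-type inequality, uniform for `x` in the unit ball about `u`
    have key : ∀ y : ℝ, t ^ 2 ≤ 2 * x ^ 2 + 2 * y ^ 2 →
        (1 + y ^ 2)⁻¹ ≤ 2 * (1 + (|u| + 1) ^ 2) * (1 + t ^ 2)⁻¹ := by
      intro y hy
      rw [← div_eq_mul_inv, le_div_iff₀ (by positivity), inv_mul_le_iff₀ (by positivity)]
      nlinarith [mul_nonneg (sq_nonneg (|u| + 1)) (sq_nonneg y), sq_nonneg y]
    have k1 := key (x + t) (by nlinarith [sq_nonneg (2 * x + t)])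
    have k2 := key (x - t) (by nlinarith [sq_nonneg (2 * x - t)])
    rw [mul_assoc]
    gcongr
    linarith
  · refine Eventually.of_forall fun t x _ => ?_
    unfold hker
    exact (((H.deriv (x + t)).comp_add_const x t).sub
      ((H.deriv (x - t)).comp_sub_const x t)).div_const _

/-- The principal value exists and equals the symmetrised integral. -/
lemma pvReal_eq (H : Good A h h') (u : ℝ) : pvReal h u = Hil h u := by
  refine Tendsto.limUnder_eq ?_
  have main : ∀ δ : ℝ, 0 < δ → ∫ u' in {u' : ℝ | δ ≤ |u' - u|}, h u' / (u' - u)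
      = ∫ t, Set.indicator {t : ℝ | δ ≤ |t|} (hker h u) t := by
    intro δ hδ
    have mS : MeasurableSet {t : ℝ | δ ≤ |t|} := measurableSet_le measurable_const (by fun_prop)
    have mS' : MeasurableSet {t : ℝ | δ ≤ |t - u|} :=
      measurableSet_le measurable_const (by fun_prop)
    set k : ℝ → ℝ := Set.indicator {t : ℝ | δ ≤ |t|} (fun t => h (u + t) / t) with hk
    have ik : Integrable k := by
      refine ((H.integrable.comp_add_left u).norm.div_const δ).mono' ?_
        (Eventually.of_forall fun t => ?_)
      · have := H.continuous.measurable
        exact (Measurable.indicator (by fun_prop) mS).aestronglyMeasurable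
      · rw [hk, Set.indicator_apply]
        split_ifs with ht
        · rw [norm_div]
          have : δ ≤ ‖t‖ := ht
          gcongr
        · simp only [norm_zero]; positivity
    have e1 : ∫ u' in {u' : ℝ | δ ≤ |u' - u|}, h u' / (u' - u) = ∫ t, k t := by
      rw [← integral_indicator mS',
        ← integral_add_left_eq_self (μ := volume) _ u]
      refine integral_congr_ae (Eventually.of_forall fun t => ?_)
      simp [hk, Set.indicator_apply]
    have e2 : ∫ t, k t = ∫ t, (k t + k (-t)) / 2 := by
      rw [integral_div, integral_add ik ik.comp_neg, integral_neg_eq_self]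
      ring
    rw [e1, e2]
    refine integral_congr_ae (Eventually.of_forall fun t => ?_)
    simp only [hk, Set.indicator_apply, Set.mem_ofPred_eq, abs_neg]
    split_ifs with ht
    · have : t ≠ 0 := by rintro rfl; simp at ht; linarith
      simp only [hker, ← sub_eq_add_neg]
      field_simp
      ring
    · simp
  have mS : ∀ δ : ℝ, MeasurableSet {t : ℝ | δ ≤ |t|} :=
    fun δ => measurableSet_le measurable_const (by fun_prop)
  have lim : Tendsto (fun δ => ∫ t, Set.indicator {t : ℝ | δ ≤ |t|} (hker h u) t)
      (nhdsWithin (0 : ℝ) (Set.Ioi 0)) (nhds (Hil h u)) := by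
    refine tendsto_integral_filter_of_dominated_convergence (fun t => ‖hker h u t‖)
      (Eventually.of_forall fun δ => (H.hker_meas u).indicator (mS δ))
      (Eventually.of_forall fun δ => Eventually.of_forall fun t => norm_indicator_le_norm_self _ _)
      (H.hker_integrable u).norm ?_
    filter_upwards [compl_mem_ae_iff.2 (measure_singleton (0 : ℝ))] with t ht
    refine tendsto_const_nhds.congr' ?_
    have : Set.Iio |t| ∈ nhdsWithin (0 : ℝ) (Set.Ioi 0) :=
      mem_nhdsWithin_of_mem_nhds (Iio_mem_nhds (abs_pos.2 ht))
    filter_upwards [this] with δ hδ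
    rw [Set.indicator_of_mem]
    exact le_of_lt (Set.mem_Iio.1 hδ)
  refine lim.congr' ?_
  filter_upwards [self_mem_nhdsWithin] with δ hδ
  exact (main δ hδ).symm

end Good

/-! ### Polynomial weights and the expansion at infinity -/

/-- `h` is differentiable with derivative `h'`, and both are bounded by
`A / ((1 + s²)(1 + |s|)ⁿ)`: there is room for `n` multiplications by `s` within `Good`. -/
structure Dec (n : ℕ) (A : ℝ) (h h' : ℝ → ℝ) : Prop where
  deriv : ∀ s, HasDerivAt h (h' s) s
  bd : ∀ s, |h s| * ((1 + s ^ 2) * (1 + |s|) ^ n) ≤ A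
  bd' : ∀ s, |h' s| * ((1 + s ^ 2) * (1 + |s|) ^ n) ≤ A

namespace Dec

variable {n : ℕ} {A : ℝ} {h h' : ℝ → ℝ}

lemma good (H : Dec n A h h') : Good A h h' := by
  have key : ∀ x s : ℝ, |x| * ((1 + s ^ 2) * (1 + |s|) ^ n) ≤ A → |x| ≤ A * (1 + s ^ 2)⁻¹ := by
    intro x s hx
    rw [← div_eq_mul_inv, le_div_iff₀ (by positivity)]
    refine le_trans ?_ hx
    have : 1 ≤ (1 + |s|) ^ n := one_le_pow₀ (by linarith [abs_nonneg s])
    gcongr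
    exact le_mul_of_one_le_right (by positivity) this
  exact ⟨H.deriv, fun s => key _ s (H.bd s), fun s => key _ s (H.bd' s)⟩

lemma mul (H : Dec (n + 1) A h h') :
    Dec n (2 * A) (fun s => s * h s) (fun s => h s + s * h' s) := by
  have hA := H.good.nonneg
  have k1 : ∀ x s : ℝ, |x| * ((1 + s ^ 2) * (1 + |s|) ^ (n + 1)) ≤ A →
      |s * x| * ((1 + s ^ 2) * (1 + |s|) ^ n) ≤ A := by
    intro x s hx
    refine le_trans ?_ hx
    have : 0 ≤ |x| * ((1 + s ^ 2) * (1 + |s|) ^ n) := by positivity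
    have e : |x| * ((1 + s ^ 2) * (1 + |s|) ^ (n + 1))
        = |s * x| * ((1 + s ^ 2) * (1 + |s|) ^ n) + |x| * ((1 + s ^ 2) * (1 + |s|) ^ n) := by
      rw [abs_mul]; ring
    linarith
  have k2 : ∀ x s : ℝ, |x| * ((1 + s ^ 2) * (1 + |s|) ^ (n + 1)) ≤ A →
      |x| * ((1 + s ^ 2) * (1 + |s|) ^ n) ≤ A := by
    intro x s hx
    refine le_trans ?_ hx
    gcongr
    · linarith [abs_nonneg s]
    · omega
  refine ⟨fun s => ?_, fun s => ?_, fun s => ?_⟩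
  · have := (hasDerivAt_id s).mul (H.deriv s)
    rw [one_mul] at this
    exact this
  · linarith [k1 _ s (H.bd s)]
  · have := k1 _ s (H.bd' s)
    have := k2 _ s (H.bd s)
    have h3 : |h s + s * h' s| * ((1 + s ^ 2) * (1 + |s|) ^ n)
      ≤ (|h s| + |s * h' s|) * ((1 + s ^ 2) * (1 + |s|) ^ n) := by
      gcongr; exact abs_add_le _ _
    linarith

/-- Integration by parts against the weight `s`. -/
lemma integral_mul_deriv (H : Dec (n + 1) A h h') (i : Integrable fun s => s * h' s) :
    ∫ s, s * h' s = - ∫ s, h s := by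
  have := integral_eq_zero_of_hasDerivAt_of_integrable H.mul.deriv
    (H.good.integrable.add i) H.mul.good.integrable
  rw [integral_add H.good.integrable i] at this
  linarith

lemma abs_integral_le (H : Dec n A h h') : |∫ s, h s| ≤ Real.pi * A := by
  have : ∫ s : ℝ, A * (1 + s ^ 2)⁻¹ = Real.pi * A := by
    rw [integral_const_mul, integral_univ_inv_one_add_sq, mul_comm]
  rw [← this]
  exact norm_integral_le_of_norm_le (f := h) (integrable_inv_one_add_sq.const_mul A)
    (Eventually.of_forall H.good.bd)

/-- Exponential decay beats all weights with `n = 4`. -/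
lemma of_exp {B : ℝ} (hd : ∀ s, HasDerivAt h (h' s) s)
    (hb : ∀ s, |h s| ≤ B * Real.exp (-|s| / 2)) (hb' : ∀ s, |h' s| ≤ B * Real.exp (-|s| / 2)) :
    Dec 4 (B * (46080 * Real.exp (1 / 2))) h h' := by
  have hB : 0 ≤ B := by simpa using (abs_nonneg _).trans (hb 0)
  have key : ∀ x s : ℝ, |x| ≤ B * Real.exp (-|s| / 2) →
      |x| * ((1 + s ^ 2) * (1 + |s|) ^ 4) ≤ B * (46080 * Real.exp (1 / 2)) := by
    intro x s hx
    have h1 := Real.pow_div_factorial_le_exp ((1 + |s|) / 2) (by positivity) 6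
    have h2 : Real.exp ((1 + |s|) / 2) = Real.exp (1 / 2) * Real.exp (|s| / 2) := by
      rw [← Real.exp_add]; congr 1; ring
    have h3 : (1 + |s|) ^ 6 ≤ 46080 * (Real.exp (1 / 2) * Real.exp (|s| / 2)) := by
      rw [← h2]
      have : (Nat.factorial 6 : ℝ) = 720 := by norm_num [Nat.factorial]
      rw [this, div_pow] at h1
      linarith
    have h4 : (1 + s ^ 2) * (1 + |s|) ^ 4 ≤ (1 + |s|) ^ 6 := by
      have : 1 + s ^ 2 ≤ (1 + |s|) ^ 2 := by
        rw [← sq_abs s]; nlinarith [abs_nonneg s]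
      calc _ ≤ (1 + |s|) ^ 2 * (1 + |s|) ^ 4 := by gcongr
        _ = _ := by ring
    have h5 : Real.exp (-|s| / 2) * Real.exp (|s| / 2) = 1 := by
      rw [← Real.exp_add]; simp [neg_div]
    calc _ ≤ B * Real.exp (-|s| / 2) * (46080 * (Real.exp (1 / 2) * Real.exp (|s| / 2))) := by
          exact mul_le_mul hx (h4.trans h3) (by positivity) (by positivity)
      _ = B * (46080 * Real.exp (1 / 2)) * (Real.exp (-|s| / 2) * Real.exp (|s| / 2)) := by ring
      _ = _ := by rw [h5, mul_one]
  exact ⟨hd, fun s => key _ s (hb s), fun s => key _ s (hb' s)⟩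

end Dec

/-- Expansion at infinity of the Hilbert transform of `F' = F1`, and of its derivative, with explicit
error: `u² α = 1 + O(1/u)` and `u³ α' = -2 + O(1/u)` when `∫ F = 1`. -/
lemma expansion {A : ℝ} {F0 F1 F2 F3 : ℝ → ℝ} (H0 : Dec 4 A F0 F1) (H1 : Dec 4 A F1 F2)
    (H2 : Dec 4 A F2 F3) (hF : ∫ s, F0 s = 1) (u : ℝ) :
    |u| * |u ^ 2 * Hil F1 u - 1| ≤ 56 * Real.pi * A ∧
    |u| * |u ^ 3 * Hil F2 u + 2| ≤ 56 * Real.pi * A := by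
  have hA := H0.good.nonneg
  have hpA : 0 ≤ Real.pi * A := mul_nonneg Real.pi_pos.le hA
  have m10 : ∫ s, F1 s = 0 := integral_eq_zero_of_hasDerivAt_of_integrable H0.deriv
    H1.good.integrable H0.good.integrable
  have m20 : ∫ s, F2 s = 0 := integral_eq_zero_of_hasDerivAt_of_integrable H1.deriv
    H2.good.integrable H1.good.integrable
  have m11 : ∫ s, s * F1 s = -1 := by
    rw [H0.integral_mul_deriv H1.mul.good.integrable, hF]
  have m21 : ∫ s, s * F2 s = 0 := by
    rw [H1.integral_mul_deriv H2.mul.good.integrable, m10, neg_zero]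
  have m22 : ∫ s, s * (s * F2 s) = 2 := by
    have i1 := H1.mul.good.integrable
    have i2 := H2.mul.mul.good.integrable
    have e : ∀ s, s * (F1 s + s * F2 s) = s * F1 s + s * (s * F2 s) := fun s => by ring
    have i3 : Integrable fun s => s * (F1 s + s * F2 s) := by
      simp only [e]; exact i1.add i2
    have := H1.mul.integral_mul_deriv i3
    simp only [e] at this
    rw [integral_add i1 i2, m11] at this
    linarith
  constructor
  · have a1 := H1.good.Hil_mul u
    have a2 := H1.mul.good.Hil_mul u
    have a3 := H1.mul.mul.good.Hil_mul u
    have b1 := H1.mul.mul.mul.good.Hil_bound u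
    have b2 := H1.mul.mul.abs_integral_le
    rw [m10, add_zero] at a1
    rw [m11, a1] at a2
    rw [a2] at a3
    have : u * (u ^ 2 * Hil F1 u - 1) = Hil (fun s => s * (s * (s * F1 s))) u
      - ∫ s, s * (s * F1 s) := by rw [a3]; ring
    rw [← abs_mul, this]
    refine (abs_sub _ _).trans ?_
    linarith
  · have a1 := H2.good.Hil_mul u
    have a2 := H2.mul.good.Hil_mul u
    have a3 := H2.mul.mul.good.Hil_mul u
    have a4 := H2.mul.mul.mul.good.Hil_mul u
    have b1 := H2.mul.mul.mul.mul.good.Hil_bound u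
    have b2 := H2.mul.mul.mul.abs_integral_le
    rw [m20, add_zero] at a1
    rw [m21, a1] at a2
    rw [m22, a2] at a3
    rw [a3] at a4
    have : u * (u ^ 3 * Hil F2 u + 2) = Hil (fun s => s * (s * (s * (s * F2 s)))) u
      - ∫ s, s * (s * (s * F2 s)) := by rw [a4]; ring
    rw [← abs_mul, this]
    refine (abs_sub _ _).trans ?_
    linarith

/-! ### Roots on a half-line -/

lemma existsUnique_root {φ φ' : ℝ → ℝ} {R κ : ℝ} (hR : 0 < R) (hκ : 0 < κ)
    (hκR : κ ≤ 1 / (2 * R)) (hd : ∀ u, HasDerivAt φ (φ' u) u)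
    (hb : ∀ u, R ≤ u → 1 / 2 ≤ u ^ 2 * φ u ∧ u ^ 2 * φ u ≤ 3 / 2) (hneg : ∀ u, R ≤ u → φ' u < 0) :
    ∃! u, R ≤ u ∧ φ u = κ ^ 2 := by
  have anti : StrictAntiOn φ (Set.Ici R) := by
    refine strictAntiOn_of_deriv_neg (convex_Ici R)
      (fun u _ => (hd u).continuousAt.continuousWithinAt) fun u hu => ?_
    rw [interior_Ici] at hu
    rw [(hd u).deriv]
    exact hneg u (le_of_lt hu)
  have hκR' : κ * (2 * R) ≤ 1 := by rwa [le_div_iff₀ (by positivity)] at hκR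
  have hRk : R ≤ 2 / κ := by rw [le_div_iff₀ hκ]; linarith
  have hlo : φ (2 / κ) ≤ κ ^ 2 := by
    have := (hb _ hRk).2
    rw [div_pow, div_mul_eq_mul_div, div_le_iff₀ (by positivity)] at this
    nlinarith [sq_nonneg κ]
  have hhi : κ ^ 2 ≤ φ R := by
    have h1 := (hb R le_rfl).1
    have h2 : (κ * (2 * R)) ^ 2 ≤ 1 := pow_le_one₀ (by positivity) hκR'
    have : R ^ 2 * κ ^ 2 ≤ R ^ 2 * φ R := by nlinarith
    exact le_of_mul_le_mul_left this (by positivity)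
  obtain ⟨u, hu, hu'⟩ := intermediate_value_Icc' hRk
    (fun u _ => (hd u).continuousAt.continuousWithinAt) ⟨hlo, hhi⟩
  refine ⟨u, ⟨hu.1, hu'⟩, fun v hv => ?_⟩
  exact anti.injOn hv.1 hu.1 (hv.2.trans hu'.symm)

/-- The root statement for a function with the asymptotics `u² φ → 1`, `u³ φ' → -2`. -/
lemma roots {φ φ' : ℝ → ℝ} {M R κ : ℝ} (hR : 0 < R) (hM : 2 * M ≤ R)
    (hκ : 0 < κ) (hκR : κ ≤ 1 / (2 * R)) (hd : ∀ u, HasDerivAt φ (φ' u) u)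
    (h1 : ∀ u, |u| * |u ^ 2 * φ u - 1| ≤ M) (h2 : ∀ u, |u| * |u ^ 3 * φ' u + 2| ≤ M) :
    (∃! u₀ : ℝ, R ≤ u₀ ∧ φ u₀ = κ ^ 2) ∧ (∃! u₀ : ℝ, u₀ ≤ -R ∧ φ u₀ = κ ^ 2) ∧
    (∀ u₀ : ℝ, (R ≤ u₀ ∨ u₀ ≤ -R) → φ u₀ = κ ^ 2 →
      (1 / 2) / κ ≤ |u₀| ∧ |u₀| ≤ 2 / κ) := by
  have key : ∀ u x : ℝ, R ≤ |u| → |u| * |x| ≤ M → |x| ≤ 1 / 2 := by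
    intro u x hu hx
    by_contra! hc
    nlinarith [abs_nonneg x]
  have hb : ∀ u, R ≤ |u| → 1 / 2 ≤ u ^ 2 * φ u ∧ u ^ 2 * φ u ≤ 3 / 2 := by
    intro u hu
    have := abs_le.1 (key u _ hu (h1 u))
    constructor <;> linarith
  have hb' : ∀ u, R ≤ |u| → u ^ 3 * φ' u < 0 := by
    intro u hu
    have := abs_le.1 (key u _ hu (h2 u))
    linarith
  refine ⟨?_, ?_, ?_⟩
  · refine existsUnique_root hR hκ hκR hd (fun u hu => hb u (hu.trans (le_abs_self u)))
      fun u hu => ?_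
    have := hb' u (hu.trans (le_abs_self u))
    have hp : 0 < u ^ 3 := pow_pos (hR.trans_le hu) 3
    by_contra! hc
    nlinarith
  · have hd' : ∀ u, HasDerivAt (fun x => φ (-x)) (-φ' (-u)) u := fun u => by
      have := (hd (-u)).scomp u (hasDerivAt_neg u)
      rw [neg_one_smul] at this
      exact this
    obtain ⟨v, ⟨hv1, hv2⟩, hv3⟩ := existsUnique_root (φ := fun x => φ (-x))
      (φ' := fun x => -φ' (-x)) hR hκ hκR hd'
      (fun u hu => by
        have := hb (-u) (by rw [abs_neg]; exact hu.trans (le_abs_self u))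
        simpa using this)
      (fun u hu => by
        have := hb' (-u) (by rw [abs_neg]; exact hu.trans (le_abs_self u))
        have hp : 0 < u ^ 3 := pow_pos (hR.trans_le hu) 3
        by_contra! hc
        nlinarith)
    refine ⟨-v, ⟨by linarith, hv2⟩, fun y hy => ?_⟩
    have := hv3 (-y) ⟨by linarith [hy.1], by simpa using hy.2⟩
    linarith
  · intro u hu he
    have hu' : R ≤ |u| := by
      rcases hu with h | h
      · exact h.trans (le_abs_self u)
      · exact (by linarith : R ≤ -u).trans (neg_le_abs u)
    have := hb u hu'
    rw [he, ← sq_abs u, ← mul_pow] at this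
    have hp : 0 ≤ |u| * κ := by positivity
    constructor
    · rw [div_le_iff₀ hκ]; nlinarith
    · rw [le_div_iff₀ hκ]; nlinarith

/-! ### The Radon transform -/

/-- The weight `∫_{ℝ²} e^{-|y|/2} dy`, the common bound for integrals over all planes. -/
def planeMass : ℝ := ∫ y : EuclideanSpace ℝ (Fin 2), Real.exp (-‖y‖ / 2)

lemma integrable_exp_plane :
    Integrable fun y : EuclideanSpace ℝ (Fin 2) => Real.exp (-‖y‖ / 2) := by
  have h := (integrable_one_add_norm (E := EuclideanSpace ℝ (Fin 2)) (μ := volume) (r := 3)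
    (by simp; norm_num)).const_mul (48 * Real.exp (1 / 2))
  refine h.mono' (by fun_prop) (Eventually.of_forall fun y => ?_)
  have hx : 0 ≤ ‖y‖ := norm_nonneg y
  have h1 := Real.pow_div_factorial_le_exp ((1 + ‖y‖) / 2) (by positivity) 3
  have h2 : Real.exp ((1 + ‖y‖) / 2) * Real.exp (-‖y‖ / 2) = Real.exp (1 / 2) := by
    rw [← Real.exp_add]; congr 1; ring
  have e : (1 + ‖y‖) ^ (-(3 : ℝ)) = ((1 + ‖y‖) ^ 3)⁻¹ := by
    rw [Real.rpow_neg (by positivity)]; norm_cast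
  rw [e, ← div_eq_mul_inv, le_div_iff₀ (by positivity), Real.norm_eq_abs,
    abs_of_pos (Real.exp_pos _), ← h2]
  have h3 : (1 + ‖y‖) ^ 3 ≤ 48 * Real.exp ((1 + ‖y‖) / 2) := by
    have : (Nat.factorial 3 : ℝ) = 6 := by norm_num [Nat.factorial]
    rw [this, div_pow] at h1
    linarith
  nlinarith [Real.exp_pos (-‖y‖ / 2)]

section plane

variable {χ : E3}

/-- An isometry from the plane orthogonal to the unit vector `χ` onto `ℝ²`. -/
def planeIso (hχ : ‖χ‖ = 1) : (ℝ ∙ χ)ᗮ ≃ₗᵢ[ℝ] EuclideanSpace ℝ (Fin 2) :=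
  haveI : Fact (Module.finrank ℝ E3 = 2 + 1) := ⟨by simp⟩
  (OrthonormalBasis.fromOrthogonalSpanSingleton (𝕜 := ℝ) 2
    (v := χ) (by rintro rfl; simp at hχ)).repr

lemma integrable_exp_orth (hχ : ‖χ‖ = 1) :
    Integrable fun w : ((ℝ ∙ χ)ᗮ : Submodule ℝ E3) => Real.exp (-‖w‖ / 2) := by
  have h := ((planeIso hχ).measurePreserving.integrable_comp_emb
    (planeIso hχ).toHomeomorph.measurableEmbedding).2 integrable_exp_plane
  refine h.congr (Eventually.of_forall fun w => ?_)
  simp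

lemma integral_exp_orth (hχ : ‖χ‖ = 1) :
    ∫ w : ((ℝ ∙ χ)ᗮ : Submodule ℝ E3), Real.exp (-‖w‖ / 2) = planeMass := by
  rw [planeMass, ← (planeIso hχ).measurePreserving.integral_comp
    (planeIso hχ).toHomeomorph.measurableEmbedding]
  simp

lemma norm_bounds (hχ : ‖χ‖ = 1) (u : ℝ) (w : ((ℝ ∙ χ)ᗮ : Submodule ℝ E3)) :
    |u| + ‖w‖ ≤ 2 * ‖u • χ + (w : E3)‖ := by
  have ho : inner ℝ (u • χ) (w : E3) = 0 := by
    rw [inner_smul_left, Submodule.mem_orthogonal_singleton_iff_inner_right.1 w.2, mul_zero]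
  have h := norm_add_sq_eq_norm_sq_add_norm_sq_real ho
  rw [norm_smul, hχ, mul_one, Real.norm_eq_abs] at h
  have h0 := norm_nonneg (u • χ + (w : E3))
  have e : ‖w‖ = ‖(w : E3)‖ := rfl
  have h1 : |u| ≤ ‖u • χ + (w : E3)‖ := by
    refine (pow_le_pow_iff_left₀ (by positivity) h0 two_ne_zero).1 ?_
    nlinarith [norm_nonneg (w : E3)]
  have h2 : ‖w‖ ≤ ‖u • χ + (w : E3)‖ := by
    rw [e]
    refine (pow_le_pow_iff_left₀ (by positivity) h0 two_ne_zero).1 ?_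
    nlinarith [abs_nonneg u]
  linarith

/-- `(u, w) ↦ uχ + w` preserves Lebesgue measure, so integrating the Radon transform over `u`
recovers the integral over `ℝ³`. -/
lemma integral_Radon (hχ : ‖χ‖ = 1) {f : E3 → ℝ} (hf : Integrable f) :
    ∫ u, Radon f χ u = ∫ v, f v := by
  let e1 := LinearIsometryEquiv.toSpanUnitSingleton (𝕜 := ℝ) χ hχ
  let e2 := (ℝ ∙ χ).orthogonalDecomposition
  let T : ℝ × ((ℝ ∙ χ)ᗮ : Submodule ℝ E3) → E3 := fun p => p.1 • χ + (p.2 : E3)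
  have mp : MeasurePreserving T (volume.prod volume) volume := by
    have a1 := e1.measurePreserving.prod
      (MeasurePreserving.id (volume : Measure ((ℝ ∙ χ)ᗮ : Submodule ℝ E3)))
    have a2 := WithLp.volume_preserving_toLp (U := (ℝ ∙ χ)) (V := ((ℝ ∙ χ)ᗮ : Submodule ℝ E3))
    have a3 := e2.symm.measurePreserving
    have := a3.comp (a2.comp a1)
    have hT : T = ⇑e2.symm ∘ WithLp.toLp 2 ∘ Prod.map (⇑e1) id := by
      rfl
    rw [hT]
    exact this
  have me : MeasurableEmbedding T := by
    refine Continuous.measurableEmbedding (by fun_prop) ?_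
    rintro ⟨a, b⟩ ⟨c, d⟩ h
    have h : a • χ + (b : E3) = c • χ + (d : E3) := h
    have hz : (a - c) • χ + ((b - d : ((ℝ ∙ χ)ᗮ : Submodule ℝ E3)) : E3) = 0 := by
      rw [sub_smul, Submodule.coe_sub, sub_add_sub_comm, h, sub_self]
    have := norm_bounds hχ (a - c) (b - d)
    rw [hz, norm_zero, mul_zero] at this
    have h1 : |a - c| = 0 := by linarith [abs_nonneg (a - c), norm_nonneg (b - d)]
    have h2 : ‖b - d‖ = 0 := by linarith [abs_nonneg (a - c), norm_nonneg (b - d)]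
    exact Prod.ext (sub_eq_zero.1 (abs_eq_zero.1 h1)) (sub_eq_zero.1 (norm_eq_zero.1 h2))
  rw [← mp.integral_comp me]
  exact (integral_prod _ ((mp.integrable_comp_emb me).2 hf)).symm

end plane

/-- The directional derivative of order `m` of `f` along `χ`. -/
def dirDeriv (f : E3 → ℝ) (χ : E3) (m : ℕ) (v : E3) : ℝ := iteratedFDeriv ℝ m f v fun _ => χ

section deriv

variable {f : E3 → ℝ} {C₀ : ℝ} {χ : E3}

lemma dirDeriv_continuous (hreg : ContDiff ℝ 8 f) {m : ℕ} (hm : m < 8) : Continuous (dirDeriv f χ m) := by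
  have := (hreg.differentiable_iteratedFDeriv (m := m) (mod_cast hm)).continuous
  unfold dirDeriv
  fun_prop

lemma dirDeriv_hasDerivAt (hreg : ContDiff ℝ 8 f) {m : ℕ} (hm : m < 8) (w : E3) (u : ℝ) :
    HasDerivAt (fun u : ℝ => dirDeriv f χ m (u • χ + w)) (dirDeriv f χ (m + 1) (u • χ + w)) u := by
  have h1 := (hreg.differentiable_iteratedFDeriv (m := m) (mod_cast hm) (u • χ + w)).hasFDerivAt
  have h2 : HasDerivAt (fun u : ℝ => u • χ + w) χ u := by
    simpa using ((hasDerivAt_id u).smul_const χ).add_const w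
  have h3 := h1.comp_hasDerivAt u h2
  have h4 := (ContinuousMultilinearMap.apply ℝ (fun _ : Fin m => E3) ℝ
    (fun _ => χ)).hasFDerivAt.comp_hasDerivAt u h3
  simp only [dirDeriv, iteratedFDeriv_succ_apply_left]
  exact h4

lemma dirDeriv_bound
    (hdecay : ∀ m : ℕ, m ≤ 8 → ∀ v : E3, ‖iteratedFDeriv ℝ m f v‖ ≤ C₀ * Real.exp (-‖v‖))
    (hχ : ‖χ‖ = 1) {m : ℕ} (hm : m ≤ 8) (u : ℝ) (w : ((ℝ ∙ χ)ᗮ : Submodule ℝ E3)) :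
    |dirDeriv f χ m (u • χ + w)| ≤ C₀ * Real.exp (-|u| / 2) * Real.exp (-‖w‖ / 2) := by
  have hC : 0 ≤ C₀ := by
    have := (norm_nonneg _).trans (hdecay 0 (by norm_num) 0)
    simpa using this
  have h1 := (iteratedFDeriv ℝ m f (u • χ + w)).le_opNorm fun _ => χ
  simp only [hχ, Finset.prod_const_one, mul_one] at h1
  refine h1.trans ((hdecay m hm _).trans ?_)
  rw [mul_assoc, ← Real.exp_add]
  gcongr
  linarith [norm_bounds hχ u w]

/-- The `m`-th derivative of the Radon transform in `u`. -/
def radonD (f : E3 → ℝ) (χ : E3) (m : ℕ) (u : ℝ) : ℝ :=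
  ∫ w : ((ℝ ∙ χ)ᗮ : Submodule ℝ E3), dirDeriv f χ m (u • χ + w)

lemma radonD_zero : radonD f χ 0 = Radon f χ := by
  funext u; simp [radonD, Radon, dirDeriv]

lemma radonD_bound
    (hdecay : ∀ m : ℕ, m ≤ 8 → ∀ v : E3, ‖iteratedFDeriv ℝ m f v‖ ≤ C₀ * Real.exp (-‖v‖))
    (hχ : ‖χ‖ = 1) {m : ℕ} (hm : m ≤ 8) (u : ℝ) :
    |radonD f χ m u| ≤ C₀ * planeMass * Real.exp (-|u| / 2) := by
  have e : ∫ w : ((ℝ ∙ χ)ᗮ : Submodule ℝ E3),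
      C₀ * Real.exp (-|u| / 2) * Real.exp (-‖w‖ / 2) = C₀ * planeMass * Real.exp (-|u| / 2) := by
    rw [integral_const_mul, integral_exp_orth hχ]; ring
  rw [← e]
  exact norm_integral_le_of_norm_le
    (f := fun w : ((ℝ ∙ χ)ᗮ : Submodule ℝ E3) => dirDeriv f χ m (u • χ + w))
    ((integrable_exp_orth hχ).const_mul _) (Eventually.of_forall (dirDeriv_bound hdecay hχ hm u))

lemma radonD_hasDerivAt (hreg : ContDiff ℝ 8 f)
    (hdecay : ∀ m : ℕ, m ≤ 8 → ∀ v : E3, ‖iteratedFDeriv ℝ m f v‖ ≤ C₀ * Real.exp (-‖v‖))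
    (hχ : ‖χ‖ = 1) {m : ℕ} (hm : m < 7) (u : ℝ) :
    HasDerivAt (radonD f χ m) (radonD f χ (m + 1) u) u := by
  have hC : 0 ≤ C₀ := by
    have := (norm_nonneg _).trans (hdecay 0 (by norm_num) 0)
    simpa using this
  have meas : ∀ {n : ℕ}, n < 8 → ∀ x : ℝ, AEStronglyMeasurable
      (fun w : ((ℝ ∙ χ)ᗮ : Submodule ℝ E3) => dirDeriv f χ n (x • χ + w)) := by
    intro n hn x
    have := dirDeriv_continuous (χ := χ) hreg hn
    exact Continuous.aestronglyMeasurable (by fun_prop)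
  have bd := (integrable_exp_orth hχ).const_mul C₀
  refine (hasDerivAt_integral_of_dominated_loc_of_deriv_le (s := Set.univ)
    (F := fun (x : ℝ) (w : ((ℝ ∙ χ)ᗮ : Submodule ℝ E3)) => dirDeriv f χ m (x • χ + w))
    (F' := fun (x : ℝ) (w : ((ℝ ∙ χ)ᗮ : Submodule ℝ E3)) => dirDeriv f χ (m + 1) (x • χ + w))
    univ_mem (Eventually.of_forall (meas (by omega)))
    (((integrable_exp_orth hχ).const_mul _).mono' (meas (by omega) u)
      (Eventually.of_forall (dirDeriv_bound hdecay hχ (by omega) u)))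
    (meas (by omega) u) (Eventually.of_forall fun w x _ => ?_) bd
    (Eventually.of_forall fun w x _ => dirDeriv_hasDerivAt hreg (by omega) w x)).2
  refine (dirDeriv_bound hdecay hχ (by omega) x w).trans ?_
  gcongr
  refine mul_le_of_le_one_right hC (Real.exp_le_one_iff.2 ?_)
  linarith [abs_nonneg x]

end deriv

/-- existence and uniqueness of the roots `u₀^±(k,χ)` of
`α(χ,·) = |k|²`.  Let `f` satisfy the regularity and decay assumption.  Then there are
`r, R, C, c > 0` such that for every unit vector `χ` and every `k` with `0 < |k| ≤ r` there is
exactly one `u₀⁺ ≥ R` and exactly one `u₀⁻ ≤ −R` solving `α(χ,u₀) = |k|²`, and every such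
root satisfies `c/|k| ≤ |u₀| ≤ C/|k|`. -/
theorem statement11 (f : EuclideanSpace ℝ (Fin 3) → ℝ) (C₀ : ℝ)
    (hpos : ∀ v : E3, 0 ≤ f v) (hreg : ContDiff ℝ 8 f)
    (hdecay : ∀ m : ℕ, m ≤ 8 → ∀ v : E3,
      ‖iteratedFDeriv ℝ m f v‖ ≤ C₀ * Real.exp (-‖v‖))
    (hnorm : ∫ v : E3, f v = 1) :
    ∃ r R C c : ℝ, 0 < r ∧ 0 < R ∧ 0 < C ∧ 0 < c ∧
      ∀ χ : E3, ‖χ‖ = 1 → ∀ k : E3, k ≠ 0 → ‖k‖ ≤ r →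
        (∃! u₀ : ℝ, R ≤ u₀ ∧ alphaFun f χ u₀ = ‖k‖ ^ 2) ∧
        (∃! u₀ : ℝ, u₀ ≤ -R ∧ alphaFun f χ u₀ = ‖k‖ ^ 2) ∧
        (∀ u₀ : ℝ, (R ≤ u₀ ∨ u₀ ≤ -R) → alphaFun f χ u₀ = ‖k‖ ^ 2 →
          c / ‖k‖ ≤ |u₀| ∧ |u₀| ≤ C / ‖k‖) := by
  have hf : Integrable f := by
    by_contra h
    rw [integral_undef h] at hnorm
    exact zero_ne_one hnorm
  obtain ⟨A, hA⟩ : ∃ A, A = C₀ * planeMass * (46080 * Real.exp (1 / 2)) := ⟨_, rfl⟩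
  set R : ℝ := max 1 (2 * (56 * Real.pi * A)) with hR
  have hR0 : 0 < R := lt_of_lt_of_le one_pos (le_max_left _ _)
  refine ⟨1 / (2 * R), R, 2, 1 / 2, by positivity, hR0, by norm_num, by norm_num,
    fun χ hχ k hk hkr => ?_⟩
  have dec : ∀ m, m < 7 → Dec 4 A (radonD f χ m) (radonD f χ (m + 1)) := fun m hm => by
    rw [hA]
    exact Dec.of_exp (radonD_hasDerivAt hreg hdecay hχ hm)
      (radonD_bound hdecay hχ (by omega)) (radonD_bound hdecay hχ (by omega))
  have D0 := dec 0 (by norm_num)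
  have D1 := dec 1 (by norm_num)
  have D2 := dec 2 (by norm_num)
  have hα : alphaFun f χ = Hil (radonD f χ 1) := by
    funext u
    have : (fun s => deriv (Radon f χ) s) = radonD f χ 1 := by
      funext s
      rw [← radonD_zero]
      exact (D0.deriv s).deriv
    rw [alphaFun, this, D1.good.pvReal_eq]
  have hI : ∫ s, radonD f χ 0 s = 1 := by
    rw [radonD_zero, integral_Radon hχ hf, hnorm]
  rw [hα]
  exact roots hR0 (le_max_right _ _) (norm_pos_iff.2 hk) hkr
    (D1.good.Hil_deriv D2.good) (fun u => (expansion D0 D1 D2 hI u).1)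
    (fun u => (expansion D0 D1 D2 hI u).2)
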